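/- arXiv:1909.03618 — 3 statements merged into one kernel-verified Lean document; each statement's English description precedes it below -/
import Mathlib

section
/- Let φ_{μ,σ}(x) = (1/(σ√(2π))) · exp(−(x − μ)²/(2σ²)) denote the normal density with mean μ and standard deviation σ, and let φ = φ_{0,1} be the standard normal density. Then for every μ with 0 ≤ μ < 1 and every real number a, ∫_{−|a|}^{|a|} (1 − x²) φ(x) dx ≥ ∫_{−|a|}^{|a|} (1 − x²) φ_{μ,√(1−μ²)}(x) dx. In words: the standard normal distribution (zero bias, unit variance) is ex post dominant within the class of normal distributions {N(μ, 1 − μ²) : 0 ≤ μ < 1} in the bias-variance game. -/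
/-- The density of the normal distribution with mean `μ` and standard deviation `σ`. -/
noncomputable def normalPDF (μ σ x : ℝ) : ℝ :=
  (1 / (σ * Real.sqrt (2 * Real.pi))) * Real.exp (-(x - μ)^2 / (2 * σ^2))

open Real in
lemma aux_nonneg_of_deriv (f f' : ℝ → ℝ) (hf : ∀ t, HasDerivAt f (f' t) t)
    (h0 : f 0 = 0) (h : ∀ t, 0 ≤ t → 0 ≤ f' t) (t : ℝ) (ht : 0 ≤ t) : 0 ≤ f t := by
  have hm : MonotoneOn f (Set.Ici 0) := by
    apply monotoneOn_of_deriv_nonneg (convex_Ici 0)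
    · exact fun x _ => (hf x).continuousAt.continuousWithinAt
    · exact fun x _ => (hf x).differentiableAt.differentiableWithinAt
    · intro x hx
      rw [interior_Ici] at hx
      rw [(hf x).deriv]
      exact h x (le_of_lt hx)
  have := hm (Set.mem_Ici.2 le_rfl) (Set.mem_Ici.2 ht) ht
  rwa [h0] at this

open Real in
lemma aux_k (t : ℝ) (ht : 0 ≤ t) : 0 ≤ t * cosh t - sinh t := by
  refine aux_nonneg_of_deriv (fun t => t * cosh t - sinh t) (fun t => t * sinh t) ?_ (by simp) ?_ t ht
  · intro t
    have := ((hasDerivAt_id t).mul (hasDerivAt_cosh t)).sub (hasDerivAt_sinh t)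
    refine HasDerivAt.congr_deriv this ?_
    simp
  · intro t ht
    exact mul_nonneg ht (sinh_nonneg_iff.2 ht)

open Real in
lemma aux_h (t : ℝ) (ht : 0 ≤ t) : 0 ≤ (3 + t^2) * sinh t - 3 * t * cosh t := by
  refine aux_nonneg_of_deriv (fun t => (3 + t^2) * sinh t - 3 * t * cosh t)
    (fun t => t * (t * cosh t - sinh t)) ?_ (by simp) ?_ t ht
  · intro t
    have := ((((hasDerivAt_id t).pow 2).const_add 3).mul (hasDerivAt_sinh t)).sub
      (((hasDerivAt_id t).const_mul 3).mul (hasDerivAt_cosh t))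
    refine HasDerivAt.congr_deriv this ?_
    simp
    ring
  · intro t ht
    exact mul_nonneg ht (aux_k t ht)

open Real in
lemma aux_g (t : ℝ) (ht : 0 ≤ t) :
    0 ≤ (15 * t + t^3) * cosh t - (15 + 6 * t^2) * sinh t := by
  refine aux_nonneg_of_deriv (fun t => (15 * t + t^3) * cosh t - (15 + 6 * t^2) * sinh t)
    (fun t => t * ((3 + t^2) * sinh t - 3 * t * cosh t)) ?_ (by simp) ?_ t ht
  · intro t
    have := ((((hasDerivAt_id t).const_mul 15).add ((hasDerivAt_id t).pow 3)).mul
      (hasDerivAt_cosh t)).sub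
      (((((hasDerivAt_id t).pow 2).const_mul 6).const_add 15).mul (hasDerivAt_sinh t))
    refine HasDerivAt.congr_deriv this ?_
    simp
    ring
  · intro t ht
    exact mul_nonneg ht (aux_h t ht)

open Real in
lemma aux_u (t : ℝ) (ht : 0 ≤ t) : t * cosh t ≤ (1 + t) * sinh t := by
  have h1 : cosh t - sinh t = exp (-t) := cosh_sub_sinh t
  have h2 : t ≤ sinh t := self_le_sinh_iff.2 ht
  have h3 : exp (-t) ≤ 1 := exp_le_one_iff.2 (by linarith)
  nlinarith [mul_le_mul_of_nonneg_left h3 ht]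

set_option maxHeartbeats 1000000 in
/-- the key inequality, in algebraic form -/
lemma aux_key (b x w t C S : ℝ) (hb : 0 ≤ b) (hx : 0 < x) (hw : w = 1 - x^2) (hw0 : 0 < w)
    (ht : t * w = b * x) (ht0 : 0 ≤ t) (hS : 0 ≤ S) (hCS : S ≤ C)
    (hk : S ≤ t * C) (hg : (15 + 6 * t^2) * S ≤ (15 * t + t^3) * C)
    (hu : t * C ≤ (1 + t) * S) :
    (b^2 + 1 - 4 * x^2 + 2 * x^4) * S ≤ b * x * (1 + b^2 - 2 * x^2) * C := by
  have hx2 : x^2 = 1 - w := by linarith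
  have hx1 : x < 1 := by nlinarith
  have hx4 : x^4 = (1 - w)^2 := by rw [← hx2]; ring
  obtain ⟨P, hP⟩ : ∃ P, P = b^2 - 1 + 2 * w := ⟨_, rfl⟩
  have hPe : 1 + b^2 - 2 * x^2 = P := by rw [hP, hx2]; ring
  have hA : b^2 + 1 - 4 * x^2 + 2 * x^4 = w * P + (1 - w) * (b^2 - 1) := by
    rw [hx4, hx2, hP]; ring
  rw [hA, hPe, ← ht]
  have hw1 : w < 1 := by nlinarith
  have hC : 0 ≤ C := hS.trans hCS
  rcases le_or_gt b 1 with hb1 | hb1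
  · have hb2 : b^2 ≤ 1 := by nlinarith
    rcases le_or_gt 0 P with hP0 | hP0
    · have h1 : 0 ≤ w * P * (t * C - S) := by
        apply mul_nonneg (by positivity); linarith
      have h2 : 0 ≤ (1 - w) * (1 - b^2) * S := by
        apply mul_nonneg (mul_nonneg _ _) hS <;> linarith
      nlinarith
    · -- P < 0
      have h1 : 0 ≤ w * (-P) * ((1 + t) * S - t * C) := by
        apply mul_nonneg (mul_nonneg _ _) <;> linarith
      have hbx : t * w ≤ 1 := by rw [ht]; nlinarith
      have h2 : 0 ≤ (-P) * (1 - t * w) * S := by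
        apply mul_nonneg (mul_nonneg _ _) hS <;> linarith
      -- remaining : A + (1+t) w (-P) ≤ 0
      have h3 : (w * P + (1 - w) * (b^2 - 1) - w * P - P) ≤ 0 := by
        rw [hP]; nlinarith
      nlinarith [mul_nonneg_of_nonpos_of_nonpos h3 (neg_nonpos.2 hS)]
  · have hz : 0 < b^2 - 1 := by nlinarith
    obtain ⟨z, hzd⟩ : ∃ z, z = b^2 - 1 := ⟨_, rfl⟩
    rw [← hzd] at hz hP ⊢
    have hP0 : 0 < P := by rw [hP]; linarith
    have ht2 : t^2 * w^2 = (1 + z) * (1 - w) := by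
      rw [hzd, ← hx2]
      have : t^2 * w^2 = (t * w)^2 := by ring
      rw [this, ht]; ring
    rcases le_or_gt (1/3) w with hw3 | hw3
    · -- Pade bound
      have hpos : 0 < 15 + t^2 := by positivity
      have hpoly : 0 ≤ 10 * w^2 - 5 * w^2 * z + z * (1 + z) * (6 * w - 1) := by
        rcases le_or_gt z 2 with h | h
        · have : 0 ≤ z * (1 + z) * (6 * w - 1) := by
            apply mul_nonneg (by positivity); linarith
          nlinarith [mul_nonneg (sq_nonneg w) (by linarith : 0 ≤ 2 - z)]
        · have h1 : 0 ≤ z * (1 + z) * (6 * w - 1 - 3 * w) := by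
            apply mul_nonneg (by positivity); linarith
          have h2 : 0 ≤ z * w * (z - 2) := by
            apply mul_nonneg (by positivity); linarith
          have h3 : 0 ≤ z * w * (1 - w) := by
            apply mul_nonneg (by positivity); linarith
          nlinarith [mul_pos hz hw0, sq_nonneg w]
      have hmain : (w * P + (1 - w) * z) * (15 + t^2) ≤ w * P * (15 + 6 * t^2) := by
        have : 0 ≤ (w * P * (15 + 6 * t^2) - (w * P + (1 - w) * z) * (15 + t^2)) * w^2 := by
          have e : (w * P * (15 + 6 * t^2) - (w * P + (1 - w) * z) * (15 + t^2)) * w^2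
              = (1 - w) * (10 * w^2 - 5 * w^2 * z + z * (1 + z) * (6 * w - 1)) := by
            rw [hP]
            linear_combination (5 * w * (z + 2 * w) - (1 - w) * z) * ht2
          rw [e]
          exact mul_nonneg (by linarith) hpoly
        have := nonneg_of_mul_nonneg_left this (by positivity)
        linarith
      have h1 := mul_le_mul_of_nonneg_right hmain hS
      have h2 := mul_le_mul_of_nonneg_left hg (mul_pos hw0 hP0).le
      have h3 : ((w * P + (1 - w) * z) * S) * (15 + t^2) ≤ (t * w * P * C) * (15 + t^2) := by
        nlinarith
      exact le_of_mul_le_mul_right h3 hpos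
    · -- coth ≥ 1
      have hmain : w * P + (1 - w) * z ≤ t * w * P := by
        rcases le_or_gt 1 (t * w) with h | h
        · have : 0 ≤ (t * w - 1) * P := mul_nonneg (by linarith) hP0.le
          rw [hP] at this ⊢
          nlinarith [mul_pos hw0 hw0]
        · have h0 : 0 ≤ t * w := by positivity
          have htt : t^2 * w^2 = (t * w) * (t * w) := by ring
          have hlt : (1 + z) * (1 - w) < 1 := by
            rw [← ht2, htt]
            exact mul_lt_one_of_nonneg_of_lt_one_left h0 h h.le
          have hzw := mul_pos hz (by linarith : 0 < 1 - w)
          have hge : 1 - w ≤ t * w := by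
            by_contra hcon
            push Not at hcon
            have h5 := mul_self_lt_mul_self h0 hcon
            rw [← htt, ht2] at h5
            have h6 : 0 < w * (1 - w) := mul_pos hw0 (by linarith)
            linarith
          have hz2 : z ≤ 1 / 2 := by
            have h6 : 0 < (1 + z) * (1/3 - w) := mul_pos (by linarith) (by linarith)
            linarith
          have : 0 ≤ (t * w - (1 - w)) * P := mul_nonneg (by linarith) hP0.le
          rw [hP] at this ⊢
          linarith [mul_nonneg hw0.le (by linarith : 0 ≤ 2 * (1 - 2 * w) - z)]
      have h1 := mul_le_mul_of_nonneg_right hmain hS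
      have h2 : t * w * P * S ≤ t * w * P * C :=
        mul_le_mul_of_nonneg_left hCS (by positivity)
      linarith

noncomputable def auxE (b x : ℝ) : ℝ :=
  Real.sqrt (1 - x^2) * Real.exp (-(x^2 * (b^2 + 1)) / (2 * (1 - x^2))) *
    (b * Real.cosh (b * x / (1 - x^2)) + x * Real.sinh (b * x / (1 - x^2)))

open Real in
lemma auxE_deriv (b x : ℝ) (hx : 0 < 1 - x^2) :
    HasDerivAt (auxE b)
      (Real.sqrt (1 - x^2) * Real.exp (-(x^2 * (b^2 + 1)) / (2 * (1 - x^2))) / (1 - x^2)^2 *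
        ((b^2 + 1 - 4 * x^2 + 2 * x^4) * Real.sinh (b * x / (1 - x^2))
          - b * x * (1 + b^2 - 2 * x^2) * Real.cosh (b * x / (1 - x^2)))) x := by
  have hne : 1 - x^2 ≠ 0 := hx.ne'
  have hw : HasDerivAt (fun x : ℝ => 1 - x^2) (-(2 * x)) x := by
    have := ((hasDerivAt_id x).pow 2).const_sub 1
    refine HasDerivAt.congr_deriv this ?_
    simp
  have hs : HasDerivAt (fun x : ℝ => √(1 - x^2)) (-(x / (1 - x^2)) * √(1 - x^2)) x := by
    refine HasDerivAt.congr_deriv (hw.sqrt hne) ?_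
    have h1 : √(1 - x^2) ≠ 0 := (Real.sqrt_pos.2 hx).ne'
    have h2 : √(1 - x^2) * √(1 - x^2) = 1 - x^2 := Real.mul_self_sqrt hx.le
    rw [div_eq_iff (by positivity)]
    field_simp
    linear_combination x * h2
  have hq : HasDerivAt (fun x : ℝ => -(x^2 * (b^2 + 1)) / (2 * (1 - x^2)))
      (-(x * (b^2 + 1)) / (1 - x^2)^2) x := by
    have h1 : HasDerivAt (fun x : ℝ => -(x^2 * (b^2 + 1))) (-(2 * x * (b^2 + 1))) x := by
      have := (((hasDerivAt_id x).pow 2).mul_const (b^2 + 1)).neg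
      refine HasDerivAt.congr_deriv this ?_
      simp
    refine HasDerivAt.congr_deriv (h1.div (hw.const_mul 2) (by simpa using hne)) ?_
    field_simp
    ring
  have ht : HasDerivAt (fun x : ℝ => b * x / (1 - x^2)) (b * (1 + x^2) / (1 - x^2)^2) x := by
    have h1 : HasDerivAt (fun x : ℝ => b * x) b x := by
      simpa using (hasDerivAt_id x).const_mul b
    refine HasDerivAt.congr_deriv (h1.div hw hne) ?_
    field_simp
    ring
  have := (hs.mul hq.exp).mul ((ht.cosh.const_mul b).add ((hasDerivAt_id x).mul ht.sinh))
  unfold auxE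
  refine HasDerivAt.congr_deriv this ?_
  simp only [Pi.mul_apply, Pi.add_apply, id]
  field_simp
  ring

open Real in
lemma auxE_le (b μ : ℝ) (hb : 0 ≤ b) (h0 : 0 ≤ μ) (h1 : μ < 1) : auxE b μ ≤ b := by
  have hpos : ∀ x ∈ Set.Icc 0 μ, 0 < 1 - x^2 := by
    intro x hx
    nlinarith [hx.1, hx.2]
  have hm : AntitoneOn (auxE b) (Set.Icc 0 μ) := by
    apply antitoneOn_of_deriv_nonpos (convex_Icc 0 μ)
    · exact fun x hx => (auxE_deriv b x (hpos x hx)).continuousAt.continuousWithinAt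
    · exact fun x hx => (auxE_deriv b x (hpos x (interior_subset hx))).differentiableAt.differentiableWithinAt
    · intro x hx
      have hp := hpos x (interior_subset hx)
      rw [interior_Icc] at hx
      rw [(auxE_deriv b x hp).deriv]
      apply mul_nonpos_of_nonneg_of_nonpos
      · positivity
      · have ht0 : 0 ≤ b * x / (1 - x^2) := by
          have := hx.1
          positivity
        have := aux_key b x (1 - x^2) (b * x / (1 - x^2)) (cosh (b * x / (1 - x^2)))
          (sinh (b * x / (1 - x^2))) hb hx.1 rfl hp (by field_simp) ht0
          (sinh_nonneg_iff.2 ht0) (sinh_lt_cosh _).le (by linarith [aux_k _ ht0])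
          (by linarith [aux_g _ ht0]) (aux_u _ ht0)
        linarith
  have := hm (Set.left_mem_Icc.2 h0) (Set.right_mem_Icc.2 h0) h0
  simpa [auxE] using this

lemma aux_integral (μ : ℝ) (hμ0 : 0 ≤ μ) (hμ1 : μ < 1) (b : ℝ) :
    ∫ x in (-b)..b, (1 - x^2) * normalPDF μ (Real.sqrt (1 - μ^2)) x
      = 2 * (1 / Real.sqrt (2 * Real.pi)) * Real.exp (-b^2 / 2) * auxE b μ := by
  have hw : 0 < 1 - μ^2 := by nlinarith
  have hsq : Real.sqrt (1 - μ^2) ^ 2 = 1 - μ^2 := Real.sq_sqrt hw.le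
  have hs : 0 < Real.sqrt (1 - μ^2) := Real.sqrt_pos.2 hw
  have hpi : 0 < Real.sqrt (2 * Real.pi) := by positivity
  have hd : ∀ x, HasDerivAt (fun x => (1 - μ^2) * ((x + μ) * normalPDF μ (Real.sqrt (1 - μ^2)) x))
      ((1 - x^2) * normalPDF μ (Real.sqrt (1 - μ^2)) x) x := by
    intro x
    unfold normalPDF
    rw [hsq]
    have h1 : HasDerivAt (fun x : ℝ => -(x - μ)^2 / (2 * (1 - μ^2)))
        (-(x - μ) / (1 - μ^2)) x := by
      have := ((((hasDerivAt_id x).sub_const μ).pow 2).neg).div_const (2 * (1 - μ^2))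
      refine HasDerivAt.congr_deriv this ?_
      simp
      field_simp
      ring
    have := (((hasDerivAt_id x).add_const μ).mul
      (h1.exp.const_mul (1 / (Real.sqrt (1 - μ^2) * Real.sqrt (2 * Real.pi))))).const_mul (1 - μ^2)
    refine HasDerivAt.congr_deriv this ?_
    simp only [id]
    field_simp
    ring
  rw [intervalIntegral.integral_eq_sub_of_hasDerivAt (fun x _ => hd x)]
  · unfold normalPDF auxE
    rw [hsq, Real.cosh_eq, Real.sinh_eq]
    have e1 : Real.exp (-(b - μ)^2 / (2 * (1 - μ^2))) = Real.exp (-b^2 / 2) *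
        Real.exp (-(μ^2 * (b^2 + 1)) / (2 * (1 - μ^2))) * Real.exp (b * μ / (1 - μ^2)) := by
      rw [← Real.exp_add, ← Real.exp_add]
      congr 1
      field_simp
      ring
    have e2 : Real.exp (-(-b - μ)^2 / (2 * (1 - μ^2))) = Real.exp (-b^2 / 2) *
        Real.exp (-(μ^2 * (b^2 + 1)) / (2 * (1 - μ^2))) * Real.exp (-(b * μ / (1 - μ^2))) := by
      rw [← Real.exp_add, ← Real.exp_add]
      congr 1
      field_simp
      ring
    rw [e1, e2]
    generalize Real.exp (-b^2 / 2) = X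
    generalize Real.exp (-(μ^2 * (b^2 + 1)) / (2 * (1 - μ^2))) = Y
    generalize Real.exp (b * μ / (1 - μ^2)) = Z
    generalize Real.exp (-(b * μ / (1 - μ^2))) = W
    rw [← hsq, Real.sqrt_sq hs.le]
    field_simp
    ring
  · apply Continuous.intervalIntegrable
    unfold normalPDF
    fun_prop

theorem std_normal_ex_post_dominant (μ : ℝ) (hμ0 : 0 ≤ μ) (hμ1 : μ < 1) (a : ℝ) :
    ∫ x in (-|a|)..|a|, (1 - x^2) * normalPDF 0 1 x
      ≥ ∫ x in (-|a|)..|a|, (1 - x^2) * normalPDF μ (Real.sqrt (1 - μ^2)) x := by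
  have h0 := aux_integral 0 le_rfl one_pos |a|
  have e : Real.sqrt (1 - (0:ℝ)^2) = 1 := by simp
  rw [e] at h0
  have e0 : auxE |a| 0 = |a| := by simp [auxE]
  rw [h0, aux_integral μ hμ0 hμ1, e0]
  exact mul_le_mul_of_nonneg_left (auxE_le _ _ (abs_nonneg a) hμ0 hμ1) (by positivity)
end

section
/- For all μ ∈ [0, 1) and all a ≥ 1, [a³μ² + μ³ + a²μ(2 − 3μ²) − a(2 − 3μ² + 2μ⁴)] · exp(aμ/(1 − μ²)) − [a³μ² − μ³ − a²μ(2 − 3μ²) − a(2 − 3μ² + 2μ⁴)] · exp(−aμ/(1 − μ²)) ≥ 0. -/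
/-- `sinh x ≤ x cosh x` for nonnegative `x`. -/
theorem aux_sinh_le (x : ℝ) (hx : 0 ≤ x) : Real.sinh x ≤ x * Real.cosh x := by
  have hd : ∀ y : ℝ, HasDerivAt (fun y => y * Real.cosh y - Real.sinh y)
      (1 * Real.cosh y + y * Real.sinh y - Real.cosh y) y := fun y =>
    ((hasDerivAt_id y).mul (Real.hasDerivAt_cosh y)).sub (Real.hasDerivAt_sinh y)
  have hm : MonotoneOn (fun y => y * Real.cosh y - Real.sinh y) (Set.Ici (0:ℝ)) := by
    apply monotoneOn_of_deriv_nonneg (convex_Ici 0)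
    · exact fun y _ => (hd y).continuousAt.continuousWithinAt
    · exact fun y _ => (hd y).differentiableAt.differentiableWithinAt
    · intro y hy
      rw [interior_Ici] at hy
      have hy0 : 0 ≤ y := le_of_lt hy
      rw [(hd y).deriv]
      have := mul_nonneg hy0 (Real.sinh_nonneg_iff.2 hy0)
      linarith
  have := hm (Set.mem_Ici.2 le_rfl) (Set.mem_Ici.2 hx) hx
  simp at this
  linarith

theorem derivative_inequality_first_level (μ a : ℝ) (hμ0 : 0 ≤ μ) (hμ1 : μ < 1) (ha : 1 ≤ a) :
    (a^3*μ^2 + μ^3 + a^2*μ*(2 - 3*μ^2) - a*(2 - 3*μ^2 + 2*μ^4)) * Real.exp (a*μ/(1 - μ^2))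
      - (a^3*μ^2 - μ^3 - a^2*μ*(2 - 3*μ^2) - a*(2 - 3*μ^2 + 2*μ^4)) * Real.exp (-(a*μ)/(1 - μ^2)) ≥ 0 := by
  have hs : 0 < 1 - μ^2 := by nlinarith
  have hs1 : 1 - μ^2 ≤ 1 := by nlinarith [sq_nonneg μ]
  have haμ : 0 ≤ a * μ := by positivity
  have hx : 0 ≤ a*μ/(1 - μ^2) := by positivity
  have hxs : a*μ/(1 - μ^2) * (1 - μ^2) = a * μ := by field_simp
  have h1 := aux_sinh_le _ hx
  have h2 := Real.add_one_le_exp (2 * (a*μ/(1 - μ^2)))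
  have h3 : Real.exp (2 * (a*μ/(1 - μ^2))) * Real.exp (-(a*μ/(1 - μ^2)))
      = Real.exp (a*μ/(1 - μ^2)) := by
    rw [← Real.exp_add]; congr 1; ring
  rw [Real.sinh_eq, Real.cosh_eq] at h1
  rw [neg_div]
  have hE := Real.exp_pos (a*μ/(1 - μ^2))
  have hF := Real.exp_pos (-(a*μ/(1 - μ^2)))
  have hEF : Real.exp (-(a*μ/(1 - μ^2))) ≤ Real.exp (a*μ/(1 - μ^2)) :=
    Real.exp_le_exp.2 (by linarith)
  have h4 := mul_le_mul_of_nonneg_right h2 hF.le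
  rw [h3] at h4
  generalize Real.exp (2 * (a*μ/(1 - μ^2))) = G at *
  generalize Real.exp (-(a*μ/(1 - μ^2))) = F at *
  generalize Real.exp (a*μ/(1 - μ^2)) = E at *
  generalize a*μ/(1 - μ^2) = x at *
  obtain ⟨s, hsd⟩ : ∃ s, s = 1 - μ^2 := ⟨_, rfl⟩
  rw [← hsd] at hs hs1 hxs
  have hm2 : μ^2 = 1 - s := by linarith
  obtain ⟨b, hbd⟩ : ∃ b, b = a^2 - 1 := ⟨_, rfl⟩
  have hb : 0 ≤ b := by nlinarith
  have ha2 : a^2 = 1 + b := by linarith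
  obtain ⟨p, hp⟩ : ∃ p, p = b*(1-s) - 2*s^2 := ⟨_, rfl⟩
  obtain ⟨q, hq⟩ : ∃ q, q = 2*s - b*(1-3*s) := ⟨_, rfl⟩
  have key : (a^3*μ^2 + μ^3 + a^2*μ*(2 - 3*μ^2) - a*(2 - 3*μ^2 + 2*μ^4)) * E
      - (a^3*μ^2 - μ^3 - a^2*μ*(2 - 3*μ^2) - a*(2 - 3*μ^2 + 2*μ^4)) * F
      = a * p * (E - F) + μ * q * (E + F) := by
    rw [hp, hq, hsd, hbd]; ring
  rw [key]
  have hD : 0 ≤ E - F := by linarith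
  have hS : 0 < E + F := by linarith
  have u1 : s * (E - F) ≤ a * μ * (E + F) := by
    have : (E - F) ≤ x * (E + F) := by linarith
    calc s * (E - F) ≤ s * (x * (E + F)) := by gcongr
      _ = _ := by rw [← hxs]; ring
  have u2 : a * μ * (E + F) ≤ (s + a * μ) * (E - F) := by
    have : x * (E + F) ≤ (1 + x) * (E - F) := by linarith
    calc a * μ * (E + F) = s * (x * (E + F)) := by rw [← hxs]; ring
      _ ≤ s * ((1 + x) * (E - F)) := by gcongr
      _ = _ := by rw [← hxs]; ring
  have ha0 : 0 ≤ a := by linarith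
  rcases le_total p 0 with hp0 | hp0
  · have e1 : 0 ≤ s * (a * p * (E - F) + μ * q * (E + F)) := by
      have w := mul_le_mul_of_nonneg_left u1 (mul_nonneg ha0 (neg_nonneg.2 hp0))
      have z : a * p * (a * μ) + s * (μ * q) = μ * (b * (1-s) * (1 - s + b)) := by
        have : a * p * (a * μ) + s * (μ * q) = μ * (a^2 * p + s * q) := by ring
        rw [this, ha2, hp, hq]; ring
      have z0 : 0 ≤ μ * (b * (1-s) * (1 - s + b)) := by
        have : 0 ≤ 1 - s := by linarith
        positivity
      rw [← z] at z0
      have := mul_nonneg z0 hS.le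
      linarith
    exact nonneg_of_mul_nonneg_right e1 hs
  · rcases le_total 0 q with hq0 | hq0
    · positivity
    · have hsm : 0 < s + a * μ := by linarith
      have e1 : 0 ≤ (s + a * μ) * (a * p * (E - F) + μ * q * (E + F)) := by
        have w := mul_le_mul_of_nonneg_left u2 (mul_nonneg ha0 hp0)
        have m1 : μ ≤ 1 - s/2 := by nlinarith [sq_nonneg (1 - μ)]
        have c1 : s + a * μ ≤ a^2 * (1 + s/2) := by
          have t1 : a * μ ≤ a * (1 - s/2) := by gcongr
          have t2 : s ≤ a * s := by nlinarith
          have t3 : a * (1 + s/2) ≤ a^2 * (1 + s/2) := by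
            have : a ≤ a^2 := by nlinarith
            gcongr
          linarith
        have c2 : (1 + s/2) * (-q) ≤ p := by
          have : p - (1 + s/2) * (-q) = b * (3/2*s + 3/2*s^2) + s + s * (1 - s) := by
            rw [hp, hq]; ring
          have : 0 ≤ b * (3/2*s + 3/2*s^2) := by positivity
          have : 0 ≤ s * (1 - s) := mul_nonneg hs.le (by linarith)
          linarith
        have c3 : (s + a * μ) * (-q) ≤ a^2 * p := by
          calc (s + a * μ) * (-q) ≤ (a^2 * (1 + s/2)) * (-q) :=
                mul_le_mul_of_nonneg_right c1 (neg_nonneg.2 hq0)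
            _ = a^2 * ((1 + s/2) * (-q)) := by ring
            _ ≤ a^2 * p := by gcongr
        have z0 : 0 ≤ μ * (a^2 * p - (s + a * μ) * (-q)) * (E + F) :=
          mul_nonneg (mul_nonneg hμ0 (by linarith)) hS.le
        linarith
      exact nonneg_of_mul_nonneg_right e1 hsm
end

section
/- For all μ ∈ [0, 1), [1 − μ − 5μ² + 3μ³ + 5μ⁴ − 2μ⁵ − μ⁶] · exp(μ/(1 − μ²)) − [1 + μ − 5μ² − 3μ³ + 5μ⁴ + 2μ⁵ − μ⁶] · exp(−μ/(1 − μ²)) ≤ 0. -/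
lemma aux_exp (x : ℝ) (hx : 0 ≤ x) : 1 - x + x^2/2 - x^3/6 ≤ Real.exp (-x) := by
  let f : ℝ → ℝ := fun y => (1 - y + y^2/2 - y^3/6) * Real.exp y
  have hd : ∀ y, HasDerivAt f (-(y^3/6) * Real.exp y) y := by
    intro y
    have h1 : HasDerivAt (fun y : ℝ => 1 - y + y^2/2 - y^3/6) (-1 + y - y^2/2) y := by
      have := ((((hasDerivAt_id y).const_sub 1).add ((hasDerivAt_pow 2 y).div_const 2)).sub
        ((hasDerivAt_pow 3 y).div_const 6))
      refine this.congr_deriv ?_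
      norm_num
      ring
    refine (h1.mul (Real.hasDerivAt_exp y)).congr_deriv ?_
    ring
  have hanti : AntitoneOn f (Set.Ici 0) := by
    apply antitoneOn_of_deriv_nonpos (convex_Ici 0)
    · exact fun y _ => (hd y).continuousAt.continuousWithinAt
    · exact fun y _ => (hd y).differentiableAt.differentiableWithinAt
    · intro y hy
      rw [interior_Ici] at hy
      have hy' : 0 < y := hy
      rw [(hd y).deriv]
      have : 0 ≤ y^3/6 * Real.exp y := by positivity
      linarith
  have h := hanti (Set.mem_Ici.2 le_rfl) (Set.mem_Ici.2 hx) hx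
  have h' : (1 - x + x^2/2 - x^3/6) * Real.exp x ≤ 1 := by simpa [f] using h
  rw [Real.exp_neg, ← one_div, le_div_iff₀ (Real.exp_pos x)]
  exact h'

lemma aux_Qneg (μ : ℝ) (h0 : 3/5 < μ) (h1 : μ < 1) : (1 + μ - 5*μ^2 - 3*μ^3 + 5*μ^4 + 2*μ^5 - μ^6) < 0 := by
  have ha : 0 ≤ μ - 3/5 := by linarith
  have hb : 0 ≤ 1 - μ := by linarith
  have h : ∀ i j : ℕ, 0 ≤ (μ - 3/5) ^ i * (1 - μ) ^ j := fun i j =>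
    mul_nonneg (pow_nonneg ha i) (pow_nonneg hb j)
  have hp : 0 < (1 - μ) ^ 6 := pow_pos (by linarith) 6
  have hp' : 0 < (μ - 3/5) * (1 - μ) ^ 5 := mul_pos (by linarith) (pow_pos (by linarith) 5)
  linarith [h 0 6,
    h 1 5,
    h 2 4,
    h 3 3,
    h 4 2,
    h 5 1,
    h 6 0]

lemma aux_Qpos (μ : ℝ) (h0 : 0 ≤ μ) (h1 : μ ≤ 1/2) : 0 ≤ (1 + μ - 5*μ^2 - 3*μ^3 + 5*μ^4 + 2*μ^5 - μ^6) := by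
  have ha : 0 ≤ μ := by linarith
  have hb : 0 ≤ 1/2 - μ := by linarith
  have h : ∀ i j : ℕ, 0 ≤ (μ) ^ i * (1/2 - μ) ^ j := fun i j =>
    mul_nonneg (pow_nonneg ha i) (pow_nonneg hb j)
  linarith [h 0 6,
    h 1 5,
    h 2 4,
    h 3 3,
    h 4 2,
    h 5 1,
    h 6 0]

lemma aux_R (μ : ℝ) (h0 : 0 ≤ μ) (h1 : μ ≤ 3/5) :
    0 ≤ 8/3 - 10/3*μ - 16/3*μ^2 + 6*μ^3 + 10/3*μ^4 - 2/3*μ^5 + 4/3*μ^6 - 2*μ^7 - 2*μ^8 := by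
  have ha : 0 ≤ μ := by linarith
  have hb : 0 ≤ 3/5 - μ := by linarith
  have h : ∀ i j : ℕ, 0 ≤ (μ) ^ i * (3/5 - μ) ^ j := fun i j =>
    mul_nonneg (pow_nonneg ha i) (pow_nonneg hb j)
  linarith [h 0 8,
    h 1 7,
    h 2 6,
    h 3 5,
    h 4 4,
    h 5 3,
    h 6 2,
    h 7 1,
    h 8 0]

lemma aux_R2 (μ : ℝ) (h0 : 1/2 ≤ μ) (h1 : μ < 1) :
    0 ≤ 2*μ^2 + 2*μ^3 - 6*μ^4 + 4*μ^6 - 2*μ^7 := by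
  have ha : 0 ≤ μ - 1/2 := by linarith
  have hb : 0 ≤ 1 - μ := by linarith
  have h : ∀ i j : ℕ, 0 ≤ (μ - 1/2) ^ i * (1 - μ) ^ j := fun i j =>
    mul_nonneg (pow_nonneg ha i) (pow_nonneg hb j)
  linarith [h 0 7,
    h 1 6,
    h 2 5,
    h 3 4,
    h 4 3,
    h 5 2,
    h 6 1,
    h 7 0]

lemma aux_key_s13 (μ : ℝ) (hμ0 : 0 ≤ μ) (hμ1 : μ < 1) :
    (1 - μ - 5*μ^2 + 3*μ^3 + 5*μ^4 - 2*μ^5 - μ^6) ≤ (1 + μ - 5*μ^2 - 3*μ^3 + 5*μ^4 + 2*μ^5 - μ^6) * Real.exp (-(2 * (μ/(1 - μ^2)))) := by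
  have hs : 0 < 1 - μ^2 := by nlinarith
  have hx : 0 ≤ 2 * (μ/(1 - μ^2)) := by positivity
  rcases le_or_gt 0 (1 + μ - 5*μ^2 - 3*μ^3 + 5*μ^4 + 2*μ^5 - μ^6) with hQ | hQ
  · have hu : μ ≤ 3/5 := by
      by_contra hc
      exact absurd (aux_Qneg μ (not_le.1 hc) hμ1) (not_lt.2 hQ)
    refine le_trans ?_ (mul_le_mul_of_nonneg_left (aux_exp _ hx) hQ)
    have hR := mul_nonneg (pow_nonneg hμ0 3) (aux_R μ hμ0 hu)
    have hR' := div_nonneg hR (pow_nonneg hs.le 3)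
    rw [← sub_nonneg]
    refine hR'.trans_eq ?_
    have := hs.ne'
    field_simp
    ring
  · have hu : 1/2 ≤ μ := by
      by_contra hc
      exact absurd (aux_Qpos μ hμ0 (not_le.1 hc).le) (not_le.2 hQ)
    have he : Real.exp (-(2 * (μ/(1 - μ^2)))) ≤ (1 - μ^2) / (1 - μ^2 + 2*μ) := by
      have h1 := Real.add_one_le_exp (2 * (μ/(1 - μ^2)))
      have h2 : (1 - μ^2) / (1 - μ^2 + 2*μ) = (2 * (μ/(1 - μ^2)) + 1)⁻¹ := by
        have := hs.ne'
        have h3 : 1 - μ^2 + 2*μ ≠ 0 := by positivity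
        rw [show 2 * (μ/(1 - μ^2)) + 1 = (1 - μ^2 + 2*μ) / (1 - μ^2) by field_simp; ring, inv_div]
      rw [h2, Real.exp_neg]
      exact inv_anti₀ (by positivity) h1
    refine le_trans ?_ (mul_le_mul_of_nonpos_left he hQ.le)
    have h3 : 0 < 1 - μ^2 + 2*μ := by positivity
    rw [← mul_div_assoc, le_div_iff₀ h3]
    linarith [aux_R2 μ hu hμ1]

theorem boundary_inequality_second_level (μ : ℝ) (hμ0 : 0 ≤ μ) (hμ1 : μ < 1) :
    (1 - μ - 5*μ^2 + 3*μ^3 + 5*μ^4 - 2*μ^5 - μ^6) * Real.exp (μ/(1 - μ^2))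
      - (1 + μ - 5*μ^2 - 3*μ^3 + 5*μ^4 + 2*μ^5 - μ^6) * Real.exp (-μ/(1 - μ^2)) ≤ 0 := by
  have hk := mul_le_mul_of_nonneg_right (aux_key_s13 μ hμ0 hμ1) (Real.exp_pos (μ/(1 - μ^2))).le
  rw [mul_assoc, ← Real.exp_add] at hk
  rw [show -(2 * (μ/(1 - μ^2))) + μ/(1 - μ^2) = -μ/(1 - μ^2) by ring] at hk
  linarith
end
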